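/- Let a ∈ ℝ with a ≠ 0, β > 0, μ, m ∈ ℝ, σ > 0 and i ∈ ℕ. Let X have law ν^i_{(μ,m,σ²)} (density x ↦ (x+μ)^{2i}/C_{2i}(m+μ; σ²) with respect to N(m, σ²)) and let η be a standard Gaussian variable independent of X. Then the law of aX + βη equals the finite mixture Σ_{k=0}^{i} ᾱ_k^{(i)} ν^k_{(μ̄, m̄, σ̄²)}, where m̄ = a m, σ̄² = β² + a²σ², μ̄ = (mβ² + μσ̄²)/(aσ²), and for k = 0, …, i: ᾱ_k^{(i)} = binom(i,k) (β^{2(i−k)}/B_i) Σ_{j=0}^{k} binom(k,j) ((μ+m)^{2j}/(C_{2j} σ^{2j})) (a^{2(k−j)} σ^{2(k−j)} / σ̄^{2(i−j)}), with B_i = Σ_{k=0}^{i} binom(i,k) (μ+m)^{2k}/(C_{2k} σ^{2k}). In particular the ᾱ_k^{(i)} are nonnegative and Σ_{k=0}^{i} ᾱ_k^{(i)} = 1. -/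

import Mathlib

open MeasureTheory ProbabilityTheory

/-- The even Gaussian moments `C_{2j} = (2j)!/(2ʲ j!)`. -/
noncomputable def gaussEvenMoment (j : ℕ) : ℝ :=
  (Nat.factorial (2 * j)) / (2 ^ j * Nat.factorial j)

/-- `C_{2i}(c; σ²) = E((σZ + c)^{2i})` for `Z` standard Gaussian. -/
noncomputable def gaussShiftedMoment (i : ℕ) (c σ : ℝ) : ℝ :=
  ∫ z, (σ * z + c) ^ (2 * i) ∂(gaussianReal 0 1)

/-- The probability measure `ν^i_{(μ,m,σ²)}` with density
`x ↦ (x+μ)^{2i}/C_{2i}(m+μ; σ²)` with respect to the Gaussian `N(m, σ²)`. -/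
noncomputable def nuKalman (i : ℕ) (μ m σ : ℝ) : Measure ℝ :=
  (gaussianReal m (Real.toNNReal (σ ^ 2))).withDensity
    (fun x => ENNReal.ofReal ((x + μ) ^ (2 * i) / gaussShiftedMoment i (m + μ) σ))

/-- Normalizing constant `B_i = ∑_{k=0}^i binom(i,k) (μ+m)^{2k}/(C_{2k} σ^{2k})`. -/
noncomputable def kalmanB (i : ℕ) (μ m σ : ℝ) : ℝ :=
  ∑ k ∈ Finset.range (i + 1),
    (Nat.choose i k : ℝ) * (μ + m) ^ (2 * k) / (gaussEvenMoment k * σ ^ (2 * k))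

/-- The mixture coefficients `ᾱ_k^{(i)}` of the prediction step, where
`σ̄² = β² + a²σ²`. -/
noncomputable def kalmanPredCoeff (i k : ℕ) (a β μ m σ : ℝ) : ℝ :=
  (Nat.choose i k : ℝ) * (β ^ (2 * (i - k)) / kalmanB i μ m σ)
    * ∑ j ∈ Finset.range (k + 1),
        (Nat.choose k j : ℝ) * ((μ + m) ^ (2 * j) / (gaussEvenMoment j * σ ^ (2 * j)))
          * (a ^ (2 * (k - j)) * σ ^ (2 * (k - j)) / (β ^ 2 + a ^ 2 * σ ^ 2) ^ (i - j))

lemma gk_integrable_pow (n : ℕ) : Integrable (fun z : ℝ => z ^ n) (gaussianReal 0 1) := by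
  have h := memLp_id_gaussianReal (μ := 0) (v := 1) (n : NNReal)
  have h2 := h.integrable_norm_pow'
  rw [← integrable_norm_iff (by fun_prop)]
  simpa using h2

lemma gk_integrable_affine_pow (n : ℕ) (s c : ℝ) :
    Integrable (fun z : ℝ => (s * z + c) ^ n) (gaussianReal 0 1) := by
  simp_rw [add_pow, mul_pow]
  refine integrable_finsetSum _ fun k _ => ?_
  exact (((gk_integrable_pow k).const_mul _).mul_const _).mul_const _

lemma gk_hasDerivAt (x : ℝ) :
    HasDerivAt (gaussianPDFReal 0 1) (-(x * gaussianPDFReal 0 1 x)) x := by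
  have h : HasDerivAt (fun x : ℝ => -(x - 0) ^ 2 / (2 * ((1 : NNReal) : ℝ))) (-x) x := by
    have := (((hasDerivAt_id' x).sub_const 0).fun_pow 2).fun_neg.div_const (2 * ((1 : NNReal) : ℝ))
    refine this.congr_deriv ?_
    simp only [NNReal.coe_one]
    norm_num
    ring
  have := (h.exp).const_mul (√(2 * Real.pi * ((1 : NNReal) : ℝ)))⁻¹
  refine this.congr_deriv ?_
  simp only [gaussianPDFReal]
  ring

lemma gk_integrable_pdf (n : ℕ) : Integrable (fun z : ℝ => z ^ n * gaussianPDFReal 0 1 z) := by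
  have h := gk_integrable_pow n
  rw [gaussianReal_of_var_ne_zero _ one_ne_zero,
    integrable_withDensity_iff (measurable_gaussianPDF 0 1)
      (Filter.Eventually.of_forall fun x => gaussianPDF_lt_top)] at h
  simpa [toReal_gaussianPDF] using h

lemma gk_rec (n : ℕ) : ∫ z, z ^ (n + 2) ∂(gaussianReal 0 1)
    = (n + 1) * ∫ z, z ^ n ∂(gaussianReal 0 1) := by
  rw [integral_gaussianReal_eq_integral_smul one_ne_zero,
    integral_gaussianReal_eq_integral_smul one_ne_zero]
  have key := integral_mul_deriv_eq_deriv_mul_of_integrable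
    (u := fun x : ℝ => x ^ (n + 1)) (u' := fun x => (n + 1 : ℝ) * x ^ n)
    (v := gaussianPDFReal 0 1) (v' := fun x => -(x * gaussianPDFReal 0 1 x))
    (fun x _ => by simpa using hasDerivAt_pow (n + 1) x) (fun x _ => gk_hasDerivAt x)
    (by
      refine (gk_integrable_pdf (n + 2)).neg.congr (Filter.Eventually.of_forall fun x => ?_)
      simp only [Pi.mul_apply, Pi.neg_apply]; ring)
    (by
      refine ((gk_integrable_pdf n).const_mul (n + 1 : ℝ)).congr
        (Filter.Eventually.of_forall fun x => ?_)
      simp only [Pi.mul_apply]; ring)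
    (gk_integrable_pdf (n + 1))
  have e1 : ∀ x : ℝ, x ^ (n + 1) * -(x * gaussianPDFReal 0 1 x)
      = -(gaussianPDFReal 0 1 x • x ^ (n + 2)) := fun x => by simp only [smul_eq_mul]; ring
  have e2 : ∀ x : ℝ, (n + 1 : ℝ) * x ^ n * gaussianPDFReal 0 1 x
      = (n + 1 : ℝ) * (gaussianPDFReal 0 1 x • x ^ n) := fun x => by
    simp only [smul_eq_mul]; ring
  simp_rw [e1, e2] at key
  rw [integral_neg, integral_const_mul] at key
  linarith

lemma gk_evenMoment_pos (j : ℕ) : 0 < gaussEvenMoment j := by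
  unfold gaussEvenMoment; positivity

lemma gk_even (j : ℕ) : ∫ z, z ^ (2 * j) ∂(gaussianReal 0 1) = gaussEvenMoment j := by
  induction j with
  | zero => simp [gaussEvenMoment]
  | succ j ih =>
    rw [show 2 * (j + 1) = 2 * j + 2 by ring, gk_rec, ih]
    unfold gaussEvenMoment
    rw [show 2 * (j + 1) = 2 * j + 1 + 1 by ring]
    simp only [Nat.factorial_succ]
    push_cast
    field_simp
    ring

lemma gk_odd (j : ℕ) : ∫ z, z ^ (2 * j + 1) ∂(gaussianReal 0 1) = 0 := by
  induction j with
  | zero => simp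
  | succ j ih =>
    rw [show 2 * (j + 1) + 1 = 2 * j + 1 + 2 by ring, gk_rec, ih, mul_zero]

lemma gk_sum_even (i : ℕ) (f : ℕ → ℝ) (hf : ∀ k < i, f (2 * k + 1) = 0) :
    ∑ n ∈ Finset.range (2 * i + 1), f n = ∑ k ∈ Finset.range (i + 1), f (2 * k) := by
  induction i with
  | zero => simp
  | succ i ih =>
    rw [show 2 * (i + 1) + 1 = 2 * i + 1 + 1 + 1 by ring, Finset.sum_range_succ,
      Finset.sum_range_succ, ih (fun k hk => hf k (by omega)), hf i (by omega),
      Finset.sum_range_succ _ (i + 1), add_zero]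
    rfl

lemma gk_choose (i k : ℕ) (hk : k ≤ i) :
    gaussEvenMoment (i - k) * (Nat.choose (2 * i) (2 * k) : ℝ)
      = gaussEvenMoment i * (Nat.choose i k : ℝ) / gaussEvenMoment k := by
  obtain ⟨p, rfl⟩ := Nat.exists_eq_add_of_le hk
  rw [Nat.add_sub_cancel_left, Nat.cast_choose ℝ (by omega : k ≤ k + p),
    Nat.cast_choose ℝ (by omega : 2 * k ≤ 2 * (k + p)), Nat.add_sub_cancel_left,
    show 2 * (k + p) - 2 * k = 2 * p by omega]
  unfold gaussEvenMoment
  have h1 : ∀ n : ℕ, (Nat.factorial n : ℝ) ≠ 0 := fun n => by positivity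
  have := h1 k
  have := h1 p
  have := h1 (k + p)
  have := h1 (2 * k)
  have := h1 (2 * p)
  field_simp
  ring

lemma gk_shifted (i : ℕ) (c s : ℝ) : gaussShiftedMoment i c s
    = gaussEvenMoment i * ∑ k ∈ Finset.range (i + 1),
        (Nat.choose i k : ℝ) * c ^ (2 * k) * s ^ (2 * (i - k)) / gaussEvenMoment k := by
  unfold gaussShiftedMoment
  have e : ∀ z : ℝ, (s * z + c) ^ (2 * i) = ∑ n ∈ Finset.range (2 * i + 1),
      (c ^ n * s ^ (2 * i - n) * (Nat.choose (2 * i) n : ℝ)) * z ^ (2 * i - n) := fun z => by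
    rw [add_comm, add_pow]
    refine Finset.sum_congr rfl fun n _ => ?_
    rw [mul_pow]; ring
  simp_rw [e]
  rw [integral_finsetSum _ (fun n _ => (gk_integrable_pow _).const_mul _)]
  simp_rw [integral_const_mul]
  rw [gk_sum_even, Finset.mul_sum]
  · refine Finset.sum_congr rfl fun k hk => ?_
    have hk' : k ≤ i := by simpa [Nat.lt_succ_iff] using hk
    rw [← Nat.mul_sub, gk_even]
    have := gk_choose i k hk'
    calc _ = c ^ (2 * k) * s ^ (2 * (i - k)) *
          (gaussEvenMoment (i - k) * (Nat.choose (2 * i) (2 * k) : ℝ)) := by ring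
      _ = _ := by rw [this]; ring
  · intro k hk
    rw [show 2 * i - (2 * k + 1) = 2 * (i - k - 1) + 1 by omega, gk_odd, mul_zero]

lemma gk_shifted_pos (i : ℕ) (c s : ℝ) (hs : s ≠ 0) : 0 < gaussShiftedMoment i c s := by
  rw [gk_shifted]
  refine mul_pos (gk_evenMoment_pos i) ?_
  refine Finset.sum_pos' (fun k _ => ?_) ⟨0, by simp, ?_⟩
  · have := gk_evenMoment_pos k
    rw [pow_mul, pow_mul]; positivity
  · have := gk_evenMoment_pos 0
    simp only [Nat.choose_zero_right, pow_mul]; positivity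

lemma gk_B (i : ℕ) (μ m σ : ℝ) (hσ : 0 < σ) :
    gaussShiftedMoment i (m + μ) σ = gaussEvenMoment i * σ ^ (2 * i) * kalmanB i μ m σ := by
  rw [gk_shifted, kalmanB, mul_assoc, Finset.mul_sum (a := σ ^ (2 * i))]
  congr 1
  refine Finset.sum_congr rfl fun k hk => ?_
  obtain ⟨p, rfl⟩ := Nat.exists_eq_add_of_le (by simpa [Nat.lt_succ_iff] using hk : k ≤ i)
  have := (gk_evenMoment_pos k).ne'
  rw [Nat.add_sub_cancel_left]
  field_simp
  ring

lemma gk_B_pos (i : ℕ) (μ m σ : ℝ) (hσ : 0 < σ) : 0 < kalmanB i μ m σ := by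
  have h := gk_shifted_pos i (m + μ) σ hσ.ne'
  rw [gk_B i μ m σ hσ] at h
  have := gk_evenMoment_pos i
  exact (pos_iff_pos_of_mul_pos h).1 (by positivity)

lemma gk_coeff_nonneg (i k : ℕ) (a β μ m σ : ℝ) (hσ : 0 < σ) :
    0 ≤ kalmanPredCoeff i k a β μ m σ := by
  unfold kalmanPredCoeff
  have := gk_B_pos i μ m σ hσ
  refine mul_nonneg ?_ (Finset.sum_nonneg fun j _ => ?_)
  · rw [pow_mul]; positivity
  · have := gk_evenMoment_pos j
    simp only [pow_mul]; positivity

lemma gk_coeff (i k : ℕ) (hk : k ≤ i) (a β μ m σ : ℝ) (ha : a ≠ 0) (hβ : 0 < β) (hσ : 0 < σ)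
    (V t : ℝ) (hV : V = β ^ 2 + a ^ 2 * σ ^ 2) (ht : t ^ 2 = V) (htp : 0 < t) :
    (Nat.choose i k : ℝ) * (a * σ ^ 2 / V) ^ (2 * k) * (-(σ * β / t)) ^ (2 * (i - k))
      / (gaussEvenMoment k * σ ^ (2 * i) * kalmanB i μ m σ)
      * gaussShiftedMoment k ((μ + m) * V / (a * σ ^ 2)) t
    = kalmanPredCoeff i k a β μ m σ := by
  obtain ⟨p, rfl⟩ := Nat.exists_eq_add_of_le hk
  unfold kalmanPredCoeff
  have hB := (gk_B_pos (k + p) μ m σ hσ).ne'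
  have hk := (gk_evenMoment_pos k).ne'
  rw [gk_shifted, ← hV, Finset.mul_sum, Finset.mul_sum, Finset.mul_sum]
  refine Finset.sum_congr rfl fun j hj => ?_
  obtain ⟨q, rfl⟩ := Nat.exists_eq_add_of_le (by simpa [Nat.lt_succ_iff] using hj : j ≤ k)
  have hj := (gk_evenMoment_pos j).ne'
  rw [Nat.add_sub_cancel_left, Nat.add_sub_cancel_left,
    show j + q + p - j = q + p by omega]
  have hVp : 0 < V := by rw [← ht]; positivity
  generalize kalmanB (j + q + p) μ m σ = B at *
  generalize gaussEvenMoment (j + q) = E at *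
  generalize gaussEvenMoment j = F at *
  generalize μ + m = c at *
  have e : (-(σ * β / t)) ^ (2 * p) = (σ ^ 2 * β ^ 2 / V) ^ p := by
    rw [pow_mul, ← ht]; congr 1; ring
  have e2 : t ^ (2 * q) = V ^ q := by rw [pow_mul, ht]
  rw [e, e2]
  clear hV ht
  simp only [div_pow, mul_pow, ← pow_mul, pow_add, mul_add]
  field_simp
  ring

lemma gk_map_affine (m σ : ℝ) :
    gaussianReal m (Real.toNNReal (σ ^ 2)) = (gaussianReal 0 1).map (fun z => σ * z + m) := by
  have h : (fun z : ℝ => σ * z + m) = (fun x => x + m) ∘ (fun z => σ * z) := rfl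
  rw [h, ← Measure.map_map (by fun_prop) (by fun_prop), gaussianReal_map_const_mul,
    gaussianReal_map_add_const]
  congr 1
  · simp
  · ext; simp [Real.coe_toNNReal _ (sq_nonneg σ)]

lemma gk_lintegral (k : ℕ) (μ m σ : ℝ) (f : ℝ → ENNReal) (hf : Measurable f) :
    ∫⁻ x, f x ∂(nuKalman k μ m σ) = ∫⁻ z, ENNReal.ofReal ((σ * z + (m + μ)) ^ (2 * k)
      / gaussShiftedMoment k (m + μ) σ) * f (σ * z + m) ∂(gaussianReal 0 1) := by
  unfold nuKalman
  rw [lintegral_withDensity_eq_lintegral_mul _ (by fun_prop) hf, gk_map_affine,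
    lintegral_map (by fun_prop) (by fun_prop)]
  simp only [Pi.mul_apply, add_assoc]

lemma gk_lintegral_moment (k : ℕ) (c s S : ℝ) (hS : 0 < S) :
    ∫⁻ z, ENNReal.ofReal ((s * z + c) ^ (2 * k) / S) ∂(gaussianReal 0 1)
      = ENNReal.ofReal (gaussShiftedMoment k c s / S) := by
  rw [gaussShiftedMoment, ← integral_div, ofReal_integral_eq_lintegral_ofReal]
  · exact (gk_integrable_affine_pow _ _ _).div_const _
  · refine Filter.Eventually.of_forall fun z => ?_
    simp only [Pi.zero_apply, pow_mul]; positivity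

lemma gk_prob (k : ℕ) (μ m σ : ℝ) (hσ : 0 < σ) : nuKalman k μ m σ Set.univ = 1 := by
  have h := gk_shifted_pos k (m + μ) σ hσ.ne'
  rw [← lintegral_one, gk_lintegral _ _ _ _ _ measurable_const]
  simp only [mul_one]
  rw [gk_lintegral_moment _ _ _ _ h, div_self h.ne', ENNReal.ofReal_one]

lemma gk_density (i : ℕ) (a β μ m σ : ℝ) (ha : a ≠ 0) (hβ : 0 < β) (hσ : 0 < σ)
    (V t : ℝ) (hV : V = β ^ 2 + a ^ 2 * σ ^ 2) (ht : t ^ 2 = V) (htp : 0 < t) (Y : ℝ) :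
    gaussShiftedMoment i (a * σ ^ 2 / V * Y) (-(σ * β / t)) / gaussShiftedMoment i (m + μ) σ
    = ∑ k ∈ Finset.range (i + 1), kalmanPredCoeff i k a β μ m σ *
        (Y ^ (2 * k) / gaussShiftedMoment k ((μ + m) * V / (a * σ ^ 2)) t) := by
  rw [gk_B i μ m σ hσ, gk_shifted, Finset.mul_sum, Finset.sum_div]
  refine Finset.sum_congr rfl fun k hk => ?_
  rw [← gk_coeff i k (by simpa [Nat.lt_succ_iff] using hk) a β μ m σ ha hβ hσ V t hV ht htp]
  have h1 := (gk_shifted_pos k ((μ + m) * V / (a * σ ^ 2)) t htp.ne').ne'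
  have h2 := (gk_B_pos i μ m σ hσ).ne'
  have h3 := (gk_evenMoment_pos k).ne'
  have h4 := (gk_evenMoment_pos i).ne'
  rw [mul_pow]
  generalize gaussShiftedMoment k ((μ + m) * V / (a * σ ^ 2)) t = T at *
  generalize a * σ ^ 2 / V = r
  generalize -(σ * β / t) = s
  field_simp

lemma gk_rotation (c s : ℝ) (h : c ^ 2 + s ^ 2 = 1) (F : ℝ × ℝ → ENNReal) (hF : Measurable F) :
    ∫⁻ p, F p ∂((gaussianReal 0 1).prod (gaussianReal 0 1))
      = ∫⁻ p, F (c * p.1 + s * p.2, -s * p.1 + c * p.2)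
          ∂((gaussianReal 0 1).prod (gaussianReal 0 1)) := by
  have hn : ‖(⟨c, s⟩ : ℂ)‖ = 1 := by
    rw [Complex.norm_eq_sqrt_sq_add_sq]; simp [h]
  have hc := Complex.norm_mul_cos_arg (⟨c, s⟩ : ℂ)
  have hs := Complex.norm_mul_sin_arg (⟨c, s⟩ : ℂ)
  rw [hn, one_mul] at hc hs
  have hrot := IsGaussian.map_rotation_eq_self (μ := gaussianReal 0 1)
    (by simp) (Complex.arg ⟨c, s⟩)
  conv_lhs => rw [← hrot]
  rw [lintegral_map hF (by fun_prop)]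
  simp only [ContinuousLinearMap.rotation_apply, hc, hs, smul_eq_mul]

theorem gk_law
    {Ω : Type*} [MeasurableSpace Ω] (P : Measure Ω) [IsProbabilityMeasure P]
    (a β μ m σ : ℝ) (ha : a ≠ 0) (hβ : 0 < β) (hσ : 0 < σ) (i : ℕ)
    (X η : Ω → ℝ) (hX : Measurable X) (hη : Measurable η)
    (hlawX : Measure.map X P = nuKalman i μ m σ)
    (hlawη : Measure.map η P = gaussianReal 0 1)
    (hindep : IndepFun X η P) :
    Measure.map (fun ω => a * X ω + β * η ω) P
      = ∑ k ∈ Finset.range (i + 1),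
          ENNReal.ofReal (kalmanPredCoeff i k a β μ m σ) •
            nuKalman k ((m * β ^ 2 + μ * (β ^ 2 + a ^ 2 * σ ^ 2)) / (a * σ ^ 2))
              (a * m) (Real.sqrt (β ^ 2 + a ^ 2 * σ ^ 2)) := by
  obtain ⟨V, hV⟩ : ∃ V, V = β ^ 2 + a ^ 2 * σ ^ 2 := ⟨_, rfl⟩
  obtain ⟨t, ht⟩ : ∃ t, t = Real.sqrt V := ⟨_, rfl⟩
  rw [← hV, ← ht]
  have hVp : 0 < V := by rw [hV]; positivity
  have htp : 0 < t := by rw [ht]; exact Real.sqrt_pos.2 hVp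
  have ht2 : t ^ 2 = V := by rw [ht]; exact Real.sq_sqrt hVp.le
  have hS := gk_shifted_pos i (m + μ) σ hσ.ne'
  have hmu : a * m + (m * β ^ 2 + μ * V) / (a * σ ^ 2) = (μ + m) * V / (a * σ ^ 2) := by
    field_simp
    rw [hV]; ring
  have : SFinite (nuKalman i μ m σ) := by rw [← hlawX]; infer_instance
  refine Measure.ext_of_lintegral _ fun f hf => ?_
  -- the right-hand side
  rw [lintegral_finsetSum_measure]
  simp_rw [lintegral_smul_measure, smul_eq_mul, gk_lintegral _ _ _ _ f hf, hmu]
  -- the left-hand side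
  have hjoint := (indepFun_iff_map_prod_eq_prod_map_map hX.aemeasurable hη.aemeasurable).1 hindep
  rw [hlawX, hlawη] at hjoint
  have hL : ∫⁻ y, f y ∂(Measure.map (fun ω => a * X ω + β * η ω) P)
      = ∫⁻ p, ENNReal.ofReal ((σ * p.1 + (m + μ)) ^ (2 * i) / gaussShiftedMoment i (m + μ) σ)
          * f (a * (σ * p.1 + m) + β * p.2) ∂((gaussianReal 0 1).prod (gaussianReal 0 1)) := by
    rw [lintegral_map hf (by fun_prop)]
    have : ∫⁻ ω, f (a * X ω + β * η ω) ∂P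
        = ∫⁻ p : ℝ × ℝ, f (a * p.1 + β * p.2) ∂(P.map (fun ω => (X ω, η ω))) := by
      rw [lintegral_map (by fun_prop) (by fun_prop)]
    rw [this, hjoint, lintegral_prod _ (by fun_prop),
      gk_lintegral _ _ _ _ _ (Measurable.lintegral_prod_right'
        (f := fun p : ℝ × ℝ => f (a * p.1 + β * p.2)) (by fun_prop)),
      lintegral_prod _ (by fun_prop)]
    refine lintegral_congr fun z => ?_
    exact (lintegral_const_mul _ (by fun_prop)).symm
  rw [hL, gk_rotation (a * σ / t) (-(β / t)) (by
    field_simp; rw [ht2, hV]; ring) _ (by fun_prop), lintegral_prod _ (by fun_prop)]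
  simp_rw [← lintegral_const_mul' _ _ ENNReal.ofReal_ne_top]
  rw [← lintegral_finsetSum _ (fun k _ => by fun_prop)]
  refine lintegral_congr fun u => ?_
  have hinner : ∀ w : ℝ, ENNReal.ofReal
      ((σ * (a * σ / t * u + -(β / t) * w) + (m + μ)) ^ (2 * i) / gaussShiftedMoment i (m + μ) σ)
        * f (a * (σ * (a * σ / t * u + -(β / t) * w) + m) + β * (- -(β / t) * u + a * σ / t * w))
      = ENNReal.ofReal ((-(σ * β / t) * w + a * σ ^ 2 / V * (t * u + (μ + m) * V / (a * σ ^ 2)))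
          ^ (2 * i) / gaussShiftedMoment i (m + μ) σ) * f (t * u + a * m) := by
    intro w
    have e1 : σ * (a * σ / t * u + -(β / t) * w) + (m + μ)
        = -(σ * β / t) * w + a * σ ^ 2 / V * (t * u + (μ + m) * V / (a * σ ^ 2)) := by
      rw [← ht2]; field_simp; ring
    have e2 : a * (σ * (a * σ / t * u + -(β / t) * w) + m)
        + β * (- -(β / t) * u + a * σ / t * w) = t * u + a * m := by
      have : t * u = V / t * u := by rw [← ht2]; field_simp
      rw [this, hV]; field_simp; ring
    rw [e1, e2]
  simp_rw [hinner]
  rw [lintegral_mul_const _ (by fun_prop), gk_lintegral_moment _ _ _ _ hS,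
    gk_density i a β μ m σ ha hβ hσ V t hV ht2 htp,
    ENNReal.ofReal_sum_of_nonneg, Finset.sum_mul]
  · refine Finset.sum_congr rfl fun k _ => ?_
    rw [ENNReal.ofReal_mul (gk_coeff_nonneg i k a β μ m σ hσ), mul_assoc]
  · intro k _
    have := gk_shifted_pos k ((μ + m) * V / (a * σ ^ 2)) t htp.ne'
    refine mul_nonneg (gk_coeff_nonneg i k a β μ m σ hσ) ?_
    rw [pow_mul]; positivity

/-- Prediction step of the Kalman filter `x' = a x + β η`: if `X ∼ ν^i_{(μ,m,σ²)}`
and `η` is an independent standard Gaussian, then the law of `aX + βη` is the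
finite mixture `∑_{k=0}^i ᾱ_k^{(i)} ν^k_{(μ̄,m̄,σ̄²)}` with `m̄ = am`,
`σ̄² = β² + a²σ²`, `μ̄ = (mβ² + μσ̄²)/(aσ²)`; the `ᾱ_k^{(i)}` are nonnegative
and sum to `1`. -/
theorem nuKalman_prediction
    {Ω : Type*} [MeasurableSpace Ω] (P : Measure Ω) [IsProbabilityMeasure P]
    (a β μ m σ : ℝ) (ha : a ≠ 0) (hβ : 0 < β) (hσ : 0 < σ) (i : ℕ)
    (X η : Ω → ℝ) (hX : Measurable X) (hη : Measurable η)
    (hlawX : Measure.map X P = nuKalman i μ m σ)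
    (hlawη : Measure.map η P = gaussianReal 0 1)
    (hindep : IndepFun X η P) :
    Measure.map (fun ω => a * X ω + β * η ω) P
      = ∑ k ∈ Finset.range (i + 1),
          ENNReal.ofReal (kalmanPredCoeff i k a β μ m σ) •
            nuKalman k ((m * β ^ 2 + μ * (β ^ 2 + a ^ 2 * σ ^ 2)) / (a * σ ^ 2))
              (a * m) (Real.sqrt (β ^ 2 + a ^ 2 * σ ^ 2)) ∧
    (∀ k, 0 ≤ kalmanPredCoeff i k a β μ m σ) ∧
    ∑ k ∈ Finset.range (i + 1), kalmanPredCoeff i k a β μ m σ = 1 := by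
  have hlaw := gk_law P a β μ m σ ha hβ hσ i X η hX hη hlawX hlawη hindep
  have hnn : ∀ k, 0 ≤ kalmanPredCoeff i k a β μ m σ :=
    fun k => gk_coeff_nonneg i k a β μ m σ hσ
  refine ⟨hlaw, hnn, ?_⟩
  have hu := congrArg (fun ν : Measure ℝ => ν Set.univ) hlaw
  have hsq : 0 < Real.sqrt (β ^ 2 + a ^ 2 * σ ^ 2) := Real.sqrt_pos.2 (by positivity)
  simp only [Measure.finsetSum_apply, Measure.smul_apply, gk_prob _ _ _ _ hsq, smul_eq_mul,
    mul_one] at hu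
  rw [Measure.map_apply (by fun_prop) MeasurableSet.univ, Set.preimage_univ, measure_univ,
    ← ENNReal.ofReal_sum_of_nonneg (fun k _ => hnn k)] at hu
  exact (ENNReal.ofReal_eq_one.1 hu.symm)
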